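/- Let φ be the discrete Gaussian free field on Λ_N (d ≥ 3) with zero boundary conditions, and A = {x_1,…,x_m} ⊆ Λ_N with A_i = {x_{i+1},…,x_m}. Then P_N(φ ∈ [0,a] on A) ≥ ∏_{i=1}^m P_{A_i^c}(φ(x_i) ∈ [0,a]) ≥ [c·min(1/2,a)]^m for a constant c = c(d) > 0 independent of N, A, a. -/

import Mathlib

open MeasureTheory Real Finset

noncomputable section

/-- The nearest neighbours of a point of `ℤ^d`. -/
def nbrs (d : ℕ) (x : Fin d → ℤ) : Finset (Fin d → ℤ) :=
  (Finset.univ : Finset (Fin d × Bool)).image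
    (fun p => Function.update x p.1 (x p.1 + if p.2 then 1 else -1))

/-- Outer boundary of a finite subset of `ℤ^d`. -/
def bdry (d : ℕ) (A : Finset (Fin d → ℤ)) : Finset (Fin d → ℤ) :=
  A.biUnion (nbrs d) \ A

/-- The Gaussian free field Hamiltonian
`H_A(φ) = (1/8d) ∑_{x,y ∈ A ∪ ∂A, |x-y| = 1} (φ x - φ y)²`. -/
def ham (d : ℕ) (A : Finset (Fin d → ℤ)) (φ : (Fin d → ℤ) → ℝ) : ℝ :=
  (1 / (8 * d)) * ∑ x ∈ A ∪ bdry d A, ∑ y ∈ A ∪ bdry d A,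
    if y ∈ nbrs d x then (φ x - φ y) ^ 2 else 0

/-- Extension of a field on `A` by zero boundary conditions. -/
def extz {d : ℕ} (A : Finset (Fin d → ℤ)) (ψ : A → ℝ) : (Fin d → ℤ) → ℝ :=
  fun x => if h : x ∈ A then ψ ⟨x, h⟩ else 0

/-- Unnormalized density of the zero-boundary GFF on `A`. -/
def gffDensity (d : ℕ) (A : Finset (Fin d → ℤ)) (ψ : A → ℝ) : ℝ :=
  Real.exp (-ham d A (extz A ψ))

/-- Partition function of the zero-boundary GFF on `A`. -/
def gffZ (d : ℕ) (A : Finset (Fin d → ℤ)) : ℝ :=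
  ∫ ψ : A → ℝ, gffDensity d A ψ

/-- The zero-boundary Gaussian free field measure on `A ⊂ ℤ^d`. -/
def gff (d : ℕ) (A : Finset (Fin d → ℤ)) : Measure (A → ℝ) :=
  (ENNReal.ofReal (gffZ d A))⁻¹ •
    volume.withDensity (fun ψ => ENNReal.ofReal (gffDensity d A ψ))

/-- The box `Λ_N = {-⌊N/2⌋, …, ⌊N/2⌋}^d`. -/
def box (d N : ℕ) : Finset (Fin d → ℤ) :=
  Fintype.piFinset (fun _ => Finset.Icc (-(N / 2 : ℤ)) (N / 2 : ℤ))

/-- Unnormalized density of the square-well pinned field on `Λ_N`. -/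
def pinDensity (d N : ℕ) (a b : ℝ) (ψ : box d N → ℝ) : ℝ :=
  Real.exp (-ham d (box d N) (extz (box d N) ψ) +
    b * ∑ x : box d N, (if ψ x ∈ Set.Icc 0 a then (1 : ℝ) else 0))

/-- Partition function of the pinned field. -/
def pinZ (d N : ℕ) (a b : ℝ) : ℝ := ∫ ψ : box d N → ℝ, pinDensity d N a b ψ

/-- The square-well pinning measure `P̃_{N,a,b}` on the box `Λ_N`. -/
def pin (d N : ℕ) (a b : ℝ) : Measure (box d N → ℝ) :=
  (ENNReal.ofReal (pinZ d N a b))⁻¹ •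
    volume.withDensity (fun ψ => ENNReal.ofReal (pinDensity d N a b ψ))

/-- The number of pinned points `ξ̃_N`. -/
def numPinned (d N : ℕ) (a : ℝ) (ψ : box d N → ℝ) : ℕ :=
  (Finset.univ.filter (fun x : box d N => ψ x ∈ Set.Icc 0 a)).card

/-- The hard wall event `Ω⁺_B` within the box, for fields on `Λ_N`: nonnegativity
at every point of `B`. -/
def wallOn (d N : ℕ) (B : Finset (Fin d → ℤ)) : Set (box d N → ℝ) :=
  {ψ | ∀ x : box d N, (x : Fin d → ℤ) ∈ B → 0 ≤ ψ x}

/-- The hard-wall event for the zero-boundary GFF on `A`. -/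
def wall {d : ℕ} (A : Finset (Fin d → ℤ)) : Set (A → ℝ) := {ψ | ∀ x, 0 ≤ ψ x}

end

noncomputable def th (i j k : ℕ) : ℝ := 2 * (i+1) / ((i+j+k+1)*(i+j+k+2)*(i+j+k+3))
noncomputable def th' (i j k : ℕ) : ℝ := 2 * i / ((i+j+k)*(i+j+k+1)*(i+j+k+2))

lemma sum_shift (M : ℕ) (u w : ℕ → ℝ) (h0 : w 0 = 0) (t : ℕ → ℝ) (ht : ∀ i, w (i+1) = t i) (hu : u M = 0) :
    ∑ i ∈ range M, t i * u (i+1) = ∑ i ∈ range M, w i * u i := by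
  have h1 := Finset.sum_range_succ (fun i => w i * u i) M
  have h2 := Finset.sum_range_succ' (fun i => w i * u i) M
  simp only [h0, hu, ht, zero_mul, mul_zero, add_zero] at h1 h2
  rw [← h2, h1]

lemma th_succ (i j k : ℕ) : th' (i+1) j k = th i j k := by
  unfold th th'; push_cast; ring_nf

lemma th_zero (j k : ℕ) : th' 0 j k = 0 := by simp [th']

lemma th_div (i j k : ℕ) : (th i j k + th j i k + th k i j) - (th' i j k + th' j i k + th' k i j) =
    if i = 0 ∧ j = 0 ∧ k = 0 then 1 else 0 := by
  split_ifs with h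
  · obtain ⟨rfl, rfl, rfl⟩ := h
    norm_num [th, th']
  · have hn : (0:ℝ) < i + j + k := by
      have : 0 < i + j + k := by omega
      exact_mod_cast this
    have e1 : th i j k + th j i k + th k i j = 2 / ((i+j+k+1)*(i+j+k+2)) := by
      unfold th
      rw [show (j:ℝ)+i+k = i+j+k by ring, show (k:ℝ)+i+j = i+j+k by ring]
      have : (0:ℝ) < i+j+k+3 := by positivity
      field_simp
      ring
    have e2 : th' i j k + th' j i k + th' k i j = 2 / ((i+j+k+1)*(i+j+k+2)) := by
      unfold th'
      rw [show (j:ℝ)+i+k = i+j+k by ring, show (k:ℝ)+i+j = i+j+k by ring]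
      field_simp
    rw [e1, e2, sub_self]

lemma flow_id (M : ℕ) (hM : 0 < M) (u : ℕ → ℕ → ℕ → ℝ)
    (h1 : ∀ j k, u M j k = 0) (h2 : ∀ i k, u i M k = 0) (h3 : ∀ i j, u i j M = 0) :
    u 0 0 0 = ∑ i ∈ range M, ∑ j ∈ range M, ∑ k ∈ range M,
      (th i j k * (u i j k - u (i+1) j k) + th j i k * (u i j k - u i (j+1) k)
        + th k i j * (u i j k - u i j (k+1))) := by
  have a1 : ∑ i ∈ range M, ∑ j ∈ range M, ∑ k ∈ range M, th i j k * u (i+1) j k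
      = ∑ i ∈ range M, ∑ j ∈ range M, ∑ k ∈ range M, th' i j k * u i j k := by
    have (g : ℕ → ℕ → ℕ → ℝ) : ∑ i ∈ range M, ∑ j ∈ range M, ∑ k ∈ range M, g i j k =
      ∑ j ∈ range M, ∑ k ∈ range M, ∑ i ∈ range M, g i j k := by
      rw [sum_comm]; refine sum_congr rfl fun j _ => ?_; rw [sum_comm]
    rw [this (fun i j k => th i j k * u (i+1) j k), this (fun i j k => th' i j k * u i j k)]
    refine sum_congr rfl fun j _ => sum_congr rfl fun k _ => ?_
    exact sum_shift M (fun i => u i j k) (fun i => th' i j k) (th_zero _ _) _ (fun i => th_succ i j k) (h1 _ _)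
  have a2 : ∑ i ∈ range M, ∑ j ∈ range M, ∑ k ∈ range M, th j i k * u i (j+1) k
      = ∑ i ∈ range M, ∑ j ∈ range M, ∑ k ∈ range M, th' j i k * u i j k := by
    refine sum_congr rfl fun i _ => ?_
    rw [sum_comm]; conv_rhs => rw [sum_comm]
    refine sum_congr rfl fun k _ => ?_
    exact sum_shift M (fun j => u i j k) (fun j => th' j i k) (th_zero _ _) _ (fun j => th_succ j i k) (h2 _ _)
  have a3 : ∑ i ∈ range M, ∑ j ∈ range M, ∑ k ∈ range M, th k i j * u i j (k+1)
      = ∑ i ∈ range M, ∑ j ∈ range M, ∑ k ∈ range M, th' k i j * u i j k := by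
    refine sum_congr rfl fun i _ => sum_congr rfl fun j _ => ?_
    exact sum_shift M (fun k => u i j k) (fun k => th' k i j) (th_zero _ _) _ (fun k => th_succ k i j) (h3 _ _)
  have : ∑ i ∈ range M, ∑ j ∈ range M, ∑ k ∈ range M,
      (th i j k * (u i j k - u (i+1) j k) + th j i k * (u i j k - u i (j+1) k)
        + th k i j * (u i j k - u i j (k+1))) =
      ∑ i ∈ range M, ∑ j ∈ range M, ∑ k ∈ range M, (if i = 0 ∧ j = 0 ∧ k = 0 then 1 else 0) * u i j k := by
    simp only [← th_div, sub_mul, add_mul, mul_sub, sum_add_distrib, sum_sub_distrib, ← a1, ← a2, ← a3]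
    ring
  rw [this]
  have hm : 0 ∈ range M := by simpa
  rw [sum_eq_single_of_mem 0 hm, sum_eq_single_of_mem 0 hm, sum_eq_single_of_mem 0 hm]
  · simp
  · intro b _ hb; simp [hb]
  · intro b _ hb; simp [hb]
  · intro b _ hb; simp [hb]

lemma th_bound (i j k : ℕ) (hi : 0 ≤ th i j k := by unfold th; positivity) :
    th i j k ^ 2 ≤ 4 * (((i:ℝ)+1)^(-(4/3):ℝ) * (((j:ℝ)+1)^(-(4/3):ℝ) * ((k:ℝ)+1)^(-(4/3):ℝ))) := by
  have hn : (0:ℝ) < (i:ℝ)+j+k+1 := by positivity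
  have h1 : th i j k ≤ 2 * (((i:ℝ)+j+k+1)^2)⁻¹ := by
    unfold th
    rw [← div_eq_mul_inv, div_le_div_iff₀ (by positivity) (by positivity)]
    have hi' : (0:ℝ) ≤ i := by positivity
    have hj' : (0:ℝ) ≤ j := by positivity
    have hk' : (0:ℝ) ≤ k := by positivity
    have e1 : ((i:ℝ)+1) ≤ (i+j+k+3) := by linarith
    have e2 : ((i:ℝ)+j+k+1) ≤ (i+j+k+2) := by linarith
    have : ((i:ℝ)+1) * (((i:ℝ)+j+k+1) * ((i:ℝ)+j+k+1)) ≤ (i+j+k+3) * (((i:ℝ)+j+k+1) * (i+j+k+2)) := by gcongr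
    nlinarith
  have h2 : th i j k ^ 2 ≤ (2 * (((i:ℝ)+j+k+1)^2)⁻¹)^2 := by gcongr
  refine h2.trans ?_
  have h3 : (((i:ℝ)+j+k+1)^2)⁻¹^2 = (((i:ℝ)+j+k+1)^3)^(-(4/3):ℝ) := by
    rw [← Real.rpow_natCast _ 3, ← Real.rpow_mul hn.le]
    norm_num
    rw [← pow_mul]
  rw [mul_pow, h3, ← Real.mul_rpow (by positivity) (by positivity), ← Real.mul_rpow (by positivity) (by positivity)]
  norm_num
  apply Real.rpow_le_rpow_of_nonpos (by positivity) _ (by norm_num)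
  calc ((i:ℝ)+1) * ((j+1)*(k+1)) ≤ ((i:ℝ)+j+k+1) * (((i:ℝ)+j+k+1)*((i:ℝ)+j+k+1)) := by
        have hi' : (0:ℝ) ≤ i := by positivity
        have hj' : (0:ℝ) ≤ j := by positivity
        have hk' : (0:ℝ) ≤ k := by positivity
        gcongr <;> linarith
    _ = _ := by ring

lemma th_energy : ∃ C : ℝ, 0 < C ∧ ∀ M : ℕ, ∑ i ∈ range M, ∑ j ∈ range M, ∑ k ∈ range M,
    (th i j k ^ 2 + th j i k ^ 2 + th k i j ^ 2) ≤ C := by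
  have hs : Summable (fun n : ℕ => ((n:ℝ)+1)^(-(4/3):ℝ)) := by
    have := (summable_nat_add_iff 1).2 (Real.summable_nat_rpow.2 (by norm_num : (-(4/3):ℝ) < -1))
    simpa using this
  set T := ∑' n : ℕ, ((n:ℝ)+1)^(-(4/3):ℝ)
  have hT : 0 ≤ T := tsum_nonneg fun n => by positivity
  refine ⟨12 * T^3 + 1, by positivity, fun M => ?_⟩
  have hsum : ∑ n ∈ range M, ((n:ℝ)+1)^(-(4/3):ℝ) ≤ T := hs.sum_le_tsum _ fun n _ => by positivity
  calc _ ≤ ∑ i ∈ range M, ∑ j ∈ range M, ∑ k ∈ range M, 12 * (((i:ℝ)+1)^(-(4/3):ℝ) * (((j:ℝ)+1)^(-(4/3):ℝ) * ((k:ℝ)+1)^(-(4/3):ℝ))) := by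
        refine sum_le_sum fun i _ => sum_le_sum fun j _ => sum_le_sum fun k _ => ?_
        have a := th_bound i j k
        have b := th_bound j i k
        have c := th_bound k i j
        nlinarith
    _ = 12 * (∑ n ∈ range M, ((n:ℝ)+1)^(-(4/3):ℝ))^3 := by
        simp only [← mul_sum, ← sum_mul]; ring
    _ ≤ 12 * T^3 + 1 := by
        have : (∑ n ∈ range M, ((n:ℝ)+1)^(-(4/3):ℝ))^3 ≤ T^3 := by
          gcongr
        linarith

lemma flow_ineq : ∃ C : ℝ, 0 < C ∧ ∀ (M : ℕ) (_ : 0 < M) (u : ℕ → ℕ → ℕ → ℝ)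
    (_ : ∀ j k, u M j k = 0) (_ : ∀ i k, u i M k = 0) (_ : ∀ i j, u i j M = 0),
    u 0 0 0 ^ 2 ≤ C * (∑ i ∈ range M, ∑ j ∈ range M, ∑ k ∈ range M,
      ((u i j k - u (i+1) j k)^2 + (u i j k - u i (j+1) k)^2 + (u i j k - u i j (k+1))^2)) := by
  obtain ⟨C, hC, h⟩ := th_energy
  refine ⟨C, hC, fun M hM u h1 h2 h3 => ?_⟩
  have cs := Finset.sum_mul_sq_le_sq_mul_sq (range M ×ˢ range M ×ˢ range M ×ˢ (univ : Finset (Fin 3)))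
    (fun p => ![th p.1 p.2.1 p.2.2.1, th p.2.1 p.1 p.2.2.1, th p.2.2.1 p.1 p.2.1] p.2.2.2)
    (fun p => ![u p.1 p.2.1 p.2.2.1 - u (p.1+1) p.2.1 p.2.2.1, u p.1 p.2.1 p.2.2.1 - u p.1 (p.2.1+1) p.2.2.1,
       u p.1 p.2.1 p.2.2.1 - u p.1 p.2.1 (p.2.2.1+1)] p.2.2.2)
  simp only [sum_product, Fin.sum_univ_three, Matrix.cons_val] at cs
  rw [← flow_id M hM u h1 h2 h3] at cs
  refine cs.trans ?_
  gcongr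
  exact h M

lemma mem_nbrs_iff (d : ℕ) (x y : Fin d → ℤ) : y ∈ nbrs d x ↔
    ∃ e : Fin d, y = Function.update x e (x e + 1) ∨ y = Function.update x e (x e - 1) := by
  simp only [nbrs, mem_image, mem_univ, true_and, Prod.exists, Bool.exists_bool]
  simp only [sub_eq_add_neg]
  constructor
  · rintro ⟨e, h | h⟩
    · exact ⟨e, Or.inr (by simpa using h.symm)⟩
    · exact ⟨e, Or.inl (by simpa using h.symm)⟩
  · rintro ⟨e, h | h⟩
    · exact ⟨e, Or.inr (by simpa using h.symm)⟩
    · exact ⟨e, Or.inl (by simpa using h.symm)⟩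

lemma nbrs_symm (d : ℕ) {x y : Fin d → ℤ} (h : y ∈ nbrs d x) : x ∈ nbrs d y := by
  rw [mem_nbrs_iff] at *
  obtain ⟨e, rfl | rfl⟩ := h
  · exact ⟨e, Or.inr (by simp)⟩
  · exact ⟨e, Or.inl (by simp)⟩

lemma union_bdry (d : ℕ) (A : Finset (Fin d → ℤ)) : A ∪ bdry d A = A ∪ A.biUnion (nbrs d) := by
  simp [bdry]

lemma mem_cl_of_nbr {d : ℕ} {A : Finset (Fin d → ℤ)} {x y : Fin d → ℤ} (hx : x ∈ A)
    (hy : y ∈ nbrs d x) : y ∈ A ∪ bdry d A := by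
  rw [union_bdry]
  exact mem_union_right _ (mem_biUnion.2 ⟨x, hx, hy⟩)

lemma mem_cl {d : ℕ} {A : Finset (Fin d → ℤ)} {x : Fin d → ℤ} (hx : x ∈ A) :
    x ∈ A ∪ bdry d A := mem_union_left _ hx

lemma ham_mono_eq {d : ℕ} {B W : Finset (Fin d → ℤ)} (hBW : B ⊆ W) (φ : (Fin d → ℤ) → ℝ)
    (hφ : ∀ y ∉ B, φ y = 0) : ham d B φ = ham d W φ := by
  unfold ham
  have hsub : B ∪ bdry d B ⊆ W ∪ bdry d W := by
    rw [union_bdry, union_bdry]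
    exact union_subset_union hBW (biUnion_subset_biUnion_of_subset_left _ hBW)
  have key : ∀ x y, ¬ (x ∈ B ∪ bdry d B ∧ y ∈ B ∪ bdry d B) →
      (if y ∈ nbrs d x then (φ x - φ y) ^ 2 else 0) = 0 := by
    intro x y h
    split_ifs with hn
    · by_cases hx : x ∈ B
      · exact absurd ⟨mem_cl hx, mem_cl_of_nbr hx hn⟩ h
      · by_cases hy : y ∈ B
        · exact absurd ⟨mem_cl_of_nbr hy (nbrs_symm d hn), mem_cl hy⟩ h
        · simp [hφ x hx, hφ y hy]
    · rfl
  congr 1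
  rw [← sum_subset hsub]
  · refine sum_congr rfl fun x hx => ?_
    exact sum_subset hsub fun y _ hy => key x y (fun h => hy h.2)
  · intro x _ hx
    exact sum_eq_zero fun y _ => key x y (fun h => hx h.1)

lemma dir_energy {d : ℕ} (hd : 0 < d) (W : Finset (Fin d → ℤ)) (φ : (Fin d → ℤ) → ℝ)
    (hφ : ∀ y ∉ W, φ y = 0) (e : Fin d) (P : Finset (Fin d → ℤ)) :
    ∑ z ∈ P, (φ z - φ (Function.update z e (z e + 1))) ^ 2 ≤ 8 * d * ham d W φ := by
  have hd' : (0:ℝ) < d := by exact_mod_cast hd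
  have : 8 * d * ham d W φ = ∑ x ∈ W ∪ bdry d W, ∑ y ∈ W ∪ bdry d W,
    if y ∈ nbrs d x then (φ x - φ y) ^ 2 else 0 := by
    unfold ham; field_simp
  rw [this]
  set T := W ∪ bdry d W with hT
  have hn : ∀ z, Function.update z e (z e + 1) ∈ nbrs d z := fun z =>
    (mem_nbrs_iff d _ _).2 ⟨e, Or.inl rfl⟩
  have hz : ∀ z, ¬ (z ∈ T ∧ Function.update z e (z e + 1) ∈ T) →
      (φ z - φ (Function.update z e (z e + 1))) ^ 2 = 0 := by
    intro z h
    by_cases hx : z ∈ W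
    · exact absurd ⟨mem_cl hx, mem_cl_of_nbr hx (hn z)⟩ h
    · by_cases hy : Function.update z e (z e + 1) ∈ W
      · exact absurd ⟨mem_cl_of_nbr hy (nbrs_symm d (hn z)), mem_cl hy⟩ h
      · simp [hφ z hx, hφ _ hy]
  have h0 : ∀ x y, 0 ≤ (if y ∈ nbrs d x then (φ x - φ y) ^ 2 else 0) := by
    intro x y; split_ifs <;> positivity
  calc _ = ∑ z ∈ P ∩ T, (φ z - φ (Function.update z e (z e + 1))) ^ 2 := by
        symm
        refine sum_subset inter_subset_left fun z h1 h2 => hz z fun h => h2 (mem_inter.2 ⟨h1, h.1⟩)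
    _ ≤ ∑ z ∈ T, (φ z - φ (Function.update z e (z e + 1))) ^ 2 :=
        sum_le_sum_of_subset_of_nonneg inter_subset_right fun _ _ _ => by positivity
    _ ≤ _ := by
        refine sum_le_sum fun z h1 => ?_
        by_cases h2 : Function.update z e (z e + 1) ∈ T
        · have := single_le_sum (f := fun y => if y ∈ nbrs d z then (φ z - φ y) ^ 2 else 0)
            (fun y _ => h0 z y) h2
          simpa [hn z] using this
        · rw [hz z fun h => h2 h.2]
          exact sum_nonneg fun y _ => h0 z y

lemma sobolev (d : ℕ) (hd : 3 ≤ d) : ∃ C : ℝ, 0 < C ∧ ∀ (N : ℕ) (φ : (Fin d → ℤ) → ℝ),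
    (∀ y ∉ box d N, φ y = 0) → ∀ x ∈ box d N, φ x ^ 2 ≤ C * ham d (box d N) φ := by
  obtain ⟨C, hC, h⟩ := flow_ineq
  have hd' : (0:ℝ) < d := by exact_mod_cast (show 0 < d by omega)
  refine ⟨C * (3 * (8 * d)), by positivity, fun N φ hφ x hx => ?_⟩
  set e0 : Fin d := ⟨0, by omega⟩ with he0
  set e1 : Fin d := ⟨1, by omega⟩ with he1
  set e2 : Fin d := ⟨2, by omega⟩ with he2
  have h01 : e0 ≠ e1 := by simp [he0, he1]
  have h02 : e0 ≠ e2 := by simp [he0, he2]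
  have h12 : e1 ≠ e2 := by simp [he1, he2]
  let p : ℕ → ℕ → ℕ → (Fin d → ℤ) := fun i j k l =>
    x l + (if l = e0 then (i:ℤ) else if l = e1 then (j:ℤ) else if l = e2 then (k:ℤ) else 0)
  have p0 : ∀ i j k, p i j k e0 = x e0 + i := by intros; simp [p]
  have p1 : ∀ i j k, p i j k e1 = x e1 + j := by intros; simp [p, h01.symm]
  have p2 : ∀ i j k, p i j k e2 = x e2 + k := by intros; simp [p, h02.symm, h12.symm]
  have q0 : ∀ i j k, p (i+1) j k = Function.update (p i j k) e0 (p i j k e0 + 1) := by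
    intro i j k; funext l
    by_cases h : l = e0
    · subst h; simp [p]; ring
    · simp [p, Function.update, h]
  have q1 : ∀ i j k, p i (j+1) k = Function.update (p i j k) e1 (p i j k e1 + 1) := by
    intro i j k; funext l
    by_cases h : l = e1
    · subst h; simp [p, h01.symm]; ring
    · simp [p, Function.update, h]
  have q2 : ∀ i j k, p i j (k+1) = Function.update (p i j k) e2 (p i j k e2 + 1) := by
    intro i j k; funext l
    by_cases h : l = e2
    · subst h; simp [p, h02.symm, h12.symm]; ring
    · simp [p, Function.update, h]
  have hx' : ∀ l, -((N:ℤ)/2) ≤ x l := by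
    intro l
    have := Fintype.mem_piFinset.1 hx l
    exact (mem_Icc.1 this).1
  have hout : ∀ z : Fin d → ℤ, ∀ l, x l + (N+1 : ℕ) = z l → φ z = 0 := by
    intro z l hz
    apply hφ
    intro hzb
    have h1 := (mem_Icc.1 (Fintype.mem_piFinset.1 hzb l)).2
    have h2 := hx' l
    push_cast at hz
    omega
  have := h (N+1) (by omega) (fun i j k => φ (p i j k))
    (fun j k => hout _ e0 (p0 _ _ _).symm) (fun j k => hout _ e1 (p1 _ _ _).symm)
    (fun j k => hout _ e2 (p2 _ _ _).symm)
  have p00 : p 0 0 0 = x := by funext l; simp [p]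
  rw [p00] at this
  refine this.trans ?_
  rw [mul_assoc]
  apply mul_le_mul_of_nonneg_left _ hC.le
  simp only [sum_add_distrib]
  have dirsum : ∀ e : Fin d, ∑ i ∈ range (N+1), ∑ j ∈ range (N+1), ∑ k ∈ range (N+1),
      (φ (p i j k) - φ (Function.update (p i j k) e (p i j k e + 1)))^2 ≤ 8 * d * ham d (box d N) φ := by
    intro e
    have e1' := dir_energy (by omega) (box d N) φ hφ e
      ((range (N+1) ×ˢ range (N+1) ×ˢ range (N+1)).image fun v => p v.1 v.2.1 v.2.2)
    rw [sum_image] at e1'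
    · simpa only [sum_product] using e1'
    · rintro ⟨i, j, k⟩ - ⟨i', j', k'⟩ - hv
      simp only at hv
      have a0 := congrFun hv e0
      have a1 := congrFun hv e1
      have a2 := congrFun hv e2
      rw [p0, p0] at a0
      rw [p1, p1] at a1
      rw [p2, p2] at a2
      simp only [Prod.mk.injEq]
      omega
  have d0 := dirsum e0
  have d1 := dirsum e1
  have d2 := dirsum e2
  simp only [← q0] at d0
  simp only [← q1] at d1
  simp only [← q2] at d2
  linarith

noncomputable def bil (d : ℕ) (W : Finset (Fin d → ℤ)) :
    ((Fin d → ℤ) → ℝ) →ₗ[ℝ] ((Fin d → ℤ) → ℝ) →ₗ[ℝ] ℝ :=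
  LinearMap.mk₂ ℝ (fun φ η => (1 / (8 * d)) * ∑ x ∈ W ∪ bdry d W, ∑ y ∈ W ∪ bdry d W,
    if y ∈ nbrs d x then (φ x - φ y) * (η x - η y) else 0)
  (by
    intro a b c
    rw [← mul_add, ← sum_add_distrib]
    congr 1
    refine sum_congr rfl fun x _ => ?_
    rw [← sum_add_distrib]
    refine sum_congr rfl fun y _ => ?_
    split_ifs
    · simp only [Pi.add_apply]; ring
    · simp)
  (by
    intro a b c
    simp only [smul_eq_mul, mul_sum, Pi.smul_apply]
    refine sum_congr rfl fun x _ => sum_congr rfl fun y _ => ?_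
    split_ifs
    · ring
    · simp)
  (by
    intro a b c
    rw [← mul_add, ← sum_add_distrib]
    congr 1
    refine sum_congr rfl fun x _ => ?_
    rw [← sum_add_distrib]
    refine sum_congr rfl fun y _ => ?_
    split_ifs
    · simp only [Pi.add_apply]; ring
    · simp)
  (by
    intro a b c
    simp only [smul_eq_mul, mul_sum, Pi.smul_apply]
    refine sum_congr rfl fun x _ => sum_congr rfl fun y _ => ?_
    split_ifs
    · ring
    · simp)

lemma bil_self (d : ℕ) (W : Finset (Fin d → ℤ)) (φ : (Fin d → ℤ) → ℝ) :
    bil d W φ φ = ham d W φ := by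
  simp [bil, ham, pow_two]

lemma bil_symm (d : ℕ) (W : Finset (Fin d → ℤ)) (φ η : (Fin d → ℤ) → ℝ) :
    bil d W φ η = bil d W η φ := by
  simp [bil, mul_comm]

lemma ham_add (d : ℕ) (W : Finset (Fin d → ℤ)) (φ η : (Fin d → ℤ) → ℝ) :
    ham d W (φ + η) = ham d W φ + 2 * bil d W φ η + ham d W η := by
  simp only [← bil_self, map_add, LinearMap.add_apply]
  rw [bil_symm d W η φ]; ring

lemma ham_smul (d : ℕ) (W : Finset (Fin d → ℤ)) (t : ℝ) (φ : (Fin d → ℤ) → ℝ) :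
    ham d W (t • φ) = t ^ 2 * ham d W φ := by
  simp only [← bil_self, map_smul, LinearMap.smul_apply, smul_eq_mul]
  ring

noncomputable def extzL {d : ℕ} (A : Finset (Fin d → ℤ)) : (A → ℝ) →ₗ[ℝ] ((Fin d → ℤ) → ℝ) where
  toFun := extz A
  map_add' a b := by
    funext x; simp only [extz, Pi.add_apply]; split_ifs <;> simp
  map_smul' a b := by
    funext x; simp only [extz, Pi.smul_apply]; split_ifs <;> simp

lemma extz_off {d : ℕ} (A : Finset (Fin d → ℤ)) (ψ : A → ℝ) (y) (hy : y ∉ A) : extz A ψ y = 0 := by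
  simp [extz, hy]

lemma extz_on {d : ℕ} (A : Finset (Fin d → ℤ)) (ψ : A → ℝ) (y) (hy : y ∈ A) :
    extz A ψ y = ψ ⟨y, hy⟩ := by
  simp [extz, hy]

lemma extz_restr {d : ℕ} (A : Finset (Fin d → ℤ)) (η : (Fin d → ℤ) → ℝ) (hη : ∀ y ∉ A, η y = 0) :
    extz A (fun y => η y) = η := by
  funext y
  by_cases hy : y ∈ A
  · rw [extz_on _ _ _ hy]
  · rw [extz_off _ _ _ hy, hη y hy]

/-- The Sobolev hypothesis. -/
def Sob (d : ℕ) (W : Finset (Fin d → ℤ)) (C : ℝ) : Prop :=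
  0 < C ∧ ∀ φ : (Fin d → ℤ) → ℝ, (∀ y ∉ W, φ y = 0) → ∀ x ∈ W, φ x ^ 2 ≤ C * ham d W φ

lemma ham_pos_def {d : ℕ} {W : Finset (Fin d → ℤ)} {C : ℝ} (hS : Sob d W C)
    (φ : (Fin d → ℤ) → ℝ) (hφ : ∀ y ∉ W, φ y = 0) (h : ham d W φ ≤ 0) : φ = 0 := by
  funext x
  by_cases hx : x ∈ W
  · have h1 := hS.2 φ hφ x hx
    have h2 : φ x ^ 2 ≤ 0 := h1.trans (mul_nonpos_of_nonneg_of_nonpos hS.1.le h)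
    simpa using le_antisymm h2 (sq_nonneg _)
  · exact hφ x hx

lemma exists_harm {d : ℕ} {W : Finset (Fin d → ℤ)} {C : ℝ} (hS : Sob d W C)
    {B : Finset (Fin d → ℤ)} (hB : B ⊆ W) (s : (Fin d → ℤ) → ℝ) :
    ∃ h : (Fin d → ℤ) → ℝ, (∀ y ∉ B, h y = s y) ∧
      ∀ η : (Fin d → ℤ) → ℝ, (∀ y ∉ B, η y = 0) → ham d W (h + η) = ham d W h + ham d W η := by
  let L : (B → ℝ) →ₗ[ℝ] Module.Dual ℝ (B → ℝ) := (bil d W).compl₁₂ (extzL B) (extzL B)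
  have hinj : Function.Injective L := by
    rw [← LinearMap.ker_eq_bot, LinearMap.ker_eq_bot']
    intro ψ hψ
    have h1 : L ψ ψ = 0 := by rw [hψ]; rfl
    have h2 : ham d W (extz B ψ) = 0 := by rw [← bil_self]; exact h1
    have h3 := ham_pos_def hS (extz B ψ) (fun y hy => extz_off _ _ _ fun h => hy (hB h)) h2.le
    funext y
    have := congrFun h3 y
    rwa [extz_on _ _ _ y.2] at this
  have hsurj : Function.Surjective L :=
    (LinearMap.injective_iff_surjective_of_finrank_eq_finrank Subspace.dual_finrank_eq.symm).1 hinj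
  obtain ⟨ψ, hψ⟩ := hsurj (-((bil d W s).comp (extzL B)))
  refine ⟨s + extz B ψ, fun y hy => by simp [extz_off _ _ _ hy], fun η hη => ?_⟩
  rw [ham_add]
  have h1 : bil d W (s + extz B ψ) η = 0 := by
    have := LinearMap.congr_fun hψ (fun y => η y)
    have e : extzL B (fun y => η y) = η := extz_restr B η hη
    simp only [L, LinearMap.compl₁₂_apply, LinearMap.neg_apply, LinearMap.comp_apply, e] at this
    rw [map_add, LinearMap.add_apply]
    have e2 : bil d W (extz B ψ) η = -bil d W s η := this
    rw [e2]; ring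
  rw [h1]; ring

lemma harm_clamp {d : ℕ} {W : Finset (Fin d → ℤ)} {C : ℝ} (hS : Sob d W C)
    {B : Finset (Fin d → ℤ)} (hB : B ⊆ W) (h : (Fin d → ℤ) → ℝ) (a : ℝ)
    (ha : 0 ≤ a) (h0 : ∀ y ∉ B, h y ∈ Set.Icc 0 a)
    (hh : ∀ η : (Fin d → ℤ) → ℝ, (∀ y ∉ B, η y = 0) → ham d W (h + η) = ham d W h + ham d W η)
    (x : Fin d → ℤ) : h x ∈ Set.Icc 0 a := by
  set h' : (Fin d → ℤ) → ℝ := fun y => max 0 (min a (h y)) with hh'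
  have hoff : ∀ y ∉ B, (h' - h) y = 0 := by
    intro y hy
    have := h0 y hy
    simp [hh', this.1, this.2]
  have h1 := hh (h' - h) hoff
  rw [add_sub_cancel] at h1
  have h2 : ham d W h' ≤ ham d W h := by
    unfold ham
    gcongr with x _ y _
    split_ifs
    · rw [sq_le_sq]
      simp only [hh']
      calc _ ≤ |min a (h x) - min a (h y)| := by
            have := abs_max_sub_max_le_max 0 (min a (h x)) 0 (min a (h y))
            simpa using this
        _ ≤ _ := by
            have := abs_min_sub_min_le_max a (h x) a (h y)
            simpa using this
    · rfl
  have h3 := ham_pos_def hS (h' - h) (fun y hy => hoff y fun h => hy (hB h)) (by linarith)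
  have h4 : h' x = h x := by
    have := congrFun h3 x
    simp only [Pi.sub_apply, Pi.zero_apply] at this
    linarith
  rw [← h4]
  exact ⟨le_max_left _ _, max_le ha (min_le_left _ _)⟩

/-- gaussian weight -/
noncomputable def ew (κ t : ℝ) : ENNReal := ENNReal.ofReal (Real.exp (-κ * t ^ 2))

lemma measurable_ew (κ : ℝ) : Measurable (ew κ) := by
  unfold ew; fun_prop

noncomputable def ind (s : Set ℝ) (t : ℝ) : ENNReal := s.indicator 1 t

lemma measurable_ind {s : Set ℝ} (hs : MeasurableSet s) : Measurable (ind s) :=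
  measurable_one.indicator hs

lemma ew_shift {κ t a : ℝ} (hκ : 0 ≤ κ) (ht : t ∈ Set.Icc 0 a) :
    ∫⁻ r, ind (Set.Icc 0 a) r * ew κ r ≤ ∫⁻ r, ind (Set.Icc 0 a) (r + t) * ew κ r := by
  obtain ⟨ht0, hta⟩ := ht
  have m1 : Measurable (fun r => ind (Set.Icc 0 (a-t)) r * ew κ r) :=
    (measurable_ind measurableSet_Icc).mul (measurable_ew κ)
  calc _ = ∫⁻ r, (ind (Set.Icc 0 (a-t)) r * ew κ r + ind (Set.Ioc (a-t) a) r * ew κ r) := by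
        refine lintegral_congr fun r => ?_
        rw [← add_mul]; congr 1
        simp only [ind, Set.indicator, Set.mem_Icc, Set.mem_Ioc, Pi.one_apply]
        split_ifs <;> first | (exfalso; grind) | simp
    _ = (∫⁻ r, ind (Set.Icc 0 (a-t)) r * ew κ r) + ∫⁻ r, ind (Set.Ioc (a-t) a) r * ew κ r :=
        lintegral_add_left m1 _
    _ ≤ (∫⁻ r, ind (Set.Icc 0 (a-t)) r * ew κ r) + ∫⁻ r, ind (Set.Ico (-t) 0) (a-t-r) * ew κ (a-t-r) := by
        refine add_le_add le_rfl (lintegral_mono fun r => ?_)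
        simp only [ind, Set.indicator, Set.mem_Ico, Set.mem_Ioc, Pi.one_apply]
        split_ifs with h1 h2
        · simp only [one_mul, ew]
          apply ENNReal.ofReal_le_ofReal
          apply Real.exp_le_exp.2
          have : (a-t-r)^2 ≤ r^2 := by nlinarith [h1.1, h1.2]
          nlinarith
        · exfalso; grind
        · simp
        · simp
    _ = (∫⁻ r, ind (Set.Icc 0 (a-t)) r * ew κ r) + ∫⁻ r, ind (Set.Ico (-t) 0) r * ew κ r := by
        rw [lintegral_sub_left_eq_self (fun r => ind (Set.Ico (-t) 0) r * ew κ r)]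
    _ = ∫⁻ r, (ind (Set.Icc 0 (a-t)) r * ew κ r + ind (Set.Ico (-t) 0) r * ew κ r) :=
        (lintegral_add_left m1 _).symm
    _ = _ := by
        refine lintegral_congr fun r => ?_
        rw [← add_mul]; congr 1
        simp only [ind, Set.indicator, Set.mem_Icc, Set.mem_Ico, Pi.one_apply]
        split_ifs <;> first | (exfalso; grind) | simp

lemma ew_total {κ : ℝ} (hκ : 0 < κ) : ∫⁻ r, ew κ r = ENNReal.ofReal (√(π / κ)) := by
  unfold ew
  rw [← ofReal_integral_eq_lintegral_ofReal (integrable_exp_neg_mul_sq hκ)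
    (Filter.Eventually.of_forall fun _ => (Real.exp_pos _).le), integral_gaussian]

lemma ew_lower {κ κ0 a : ℝ} (h0 : 0 < κ0) (hκ : κ0 ≤ κ) (ha : 0 < a) :
    ENNReal.ofReal (√(κ0/π) * Real.exp (-κ0/4) * min (1/2) a) * ∫⁻ r, ew κ r ≤
      ∫⁻ r, ind (Set.Icc 0 a) r * ew κ r := by
  have hk : 0 < κ := h0.trans_le hκ
  set b := min (1/2) a with hb
  have hb0 : 0 < b := by positivity
  set q := √(κ0/κ) with hq
  have hq0 : 0 ≤ q := Real.sqrt_nonneg _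
  have hq1 : q ≤ 1 := by
    rw [hq, Real.sqrt_le_one]; rw [div_le_one hk]; exact hκ
  have hqs : q^2 * κ = κ0 := by
    rw [hq, Real.sq_sqrt (by positivity)]; field_simp
  rw [ew_total hk, ← ENNReal.ofReal_mul (by positivity)]
  have e1 : √(κ0/π) * Real.exp (-κ0/4) * b * √(π/κ) = Real.exp (-κ0/4) * (q * b) := by
    have : √(κ0/π) * √(π/κ) = q := by
      rw [← Real.sqrt_mul (by positivity), hq]
      congr 1
      field_simp
    rw [← this]; ring
  rw [e1, ENNReal.ofReal_mul (by positivity)]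
  calc _ = ∫⁻ r, ind (Set.Icc 0 (q*b)) r * ENNReal.ofReal (Real.exp (-κ0/4)) := by
        rw [lintegral_mul_const _ (measurable_ind measurableSet_Icc)]
        unfold ind
        rw [lintegral_indicator_one measurableSet_Icc, Real.volume_Icc, sub_zero, mul_comm]
    _ ≤ _ := by
        refine lintegral_mono fun r => ?_
        simp only [ind, Set.indicator, Set.mem_Icc, Pi.one_apply]
        split_ifs with h1 h2 h2
        · simp only [one_mul, ew]
          apply ENNReal.ofReal_le_ofReal
          apply Real.exp_le_exp.2
          have : r^2 ≤ (q*b)^2 := by gcongr; exact h1.1; exact h1.2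
          have b2 : b ≤ 1/2 := min_le_left _ _
          have : κ * r^2 ≤ κ0 * b^2 := by
            calc κ * r^2 ≤ κ * (q*b)^2 := by gcongr
              _ = (q^2 * κ) * b^2 := by ring
              _ = _ := by rw [hqs]
          have b3 : b^2 ≤ 1/4 := by nlinarith
          have b4 : κ0 * b^2 ≤ κ0 * (1/4) := by gcongr
          linarith
        · exfalso
          apply h2
          refine ⟨h1.1, h1.2.trans ?_⟩
          calc q * b ≤ 1 * b := by gcongr
            _ ≤ a := by rw [one_mul]; exact min_le_right _ _
        · simp
        · simp

noncomputable def fw (d : ℕ) (W : Finset (Fin d → ℤ)) (φ : (Fin d → ℤ) → ℝ) : ENNReal :=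
  ENNReal.ofReal (Real.exp (-ham d W φ))

lemma measurable_ham (d : ℕ) (W : Finset (Fin d → ℤ)) : Measurable (ham d W) := by
  unfold ham
  refine Measurable.const_mul (Finset.measurable_fun_sum _ fun x _ => Finset.measurable_fun_sum _ fun y _ => ?_) _
  split_ifs
  · fun_prop
  · fun_prop

lemma measurable_fw (d : ℕ) (W : Finset (Fin d → ℤ)) : Measurable (fw d W) := by
  have := measurable_ham d W
  unfold fw; fun_prop

lemma measurable_mul_fw {d : ℕ} (W : Finset (Fin d → ℤ)) {g : ((Fin d → ℤ) → ℝ) → ENNReal}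
    (hg : Measurable g) : Measurable (fun φ => g φ * fw d W φ) := hg.mul (measurable_fw d W)

/-- lower marginals with Lebesgue reference measure -/
noncomputable def lm {d : ℕ} (B : Finset (Fin d → ℤ)) (F : ((Fin d → ℤ) → ℝ) → ENNReal) :
    ((Fin d → ℤ) → ℝ) → ENNReal :=
  lmarginal (fun _ : Fin d → ℤ => (volume : Measure ℝ)) B F

lemma updateFinset_zero {d : ℕ} (B : Finset (Fin d → ℤ)) (ψ : B → ℝ) :
    Function.updateFinset (0 : (Fin d → ℤ) → ℝ) B ψ = extz B ψ := by
  funext y; simp [Function.updateFinset, extz]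

lemma lm_zero {d : ℕ} (B : Finset (Fin d → ℤ)) (F : ((Fin d → ℤ) → ℝ) → ENNReal) :
    lm B F 0 = ∫⁻ ψ : B → ℝ, F (extz B ψ) := by
  unfold lm lmarginal
  simp only [updateFinset_zero]
  rfl

lemma lm_shift {d : ℕ} (B : Finset (Fin d → ℤ)) (F : ((Fin d → ℤ) → ℝ) → ENNReal)
    (s h : (Fin d → ℤ) → ℝ) (hs : ∀ y ∉ B, h y = s y) :
    lm B F s = ∫⁻ ψ : B → ℝ, F (h + extz B ψ) := by
  rw [← lintegral_sub_right_eq_self (fun ψ : B → ℝ => F (h + extz B ψ)) (fun y : B => h y)]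
  unfold lm lmarginal
  refine lintegral_congr fun ψ => ?_
  congr 1
  funext y
  by_cases hy : y ∈ B
  · simp [Function.updateFinset, hy, extz]
  · simp [Function.updateFinset, hy, extz, hs y hy]

lemma lm_harm {d : ℕ} {W B : Finset (Fin d → ℤ)} (s h : (Fin d → ℤ) → ℝ)
    (hs : ∀ y ∉ B, h y = s y)
    (hh : ∀ η : (Fin d → ℤ) → ℝ, (∀ y ∉ B, η y = 0) → ham d W (h + η) = ham d W h + ham d W η)
    (g : ((Fin d → ℤ) → ℝ) → ENNReal) (hg : Measurable g) :
    lm B (fun φ => g φ * fw d W φ) s = fw d W h * lm B (fun φ => g (φ + h) * fw d W φ) 0 := by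
  rw [lm_shift B _ s h hs, lm_zero]
  have hext : Measurable (extz B : (B → ℝ) → _) := by
    refine measurable_pi_iff.2 fun y => ?_
    unfold extz
    split_ifs
    · fun_prop
    · fun_prop
  rw [← lintegral_const_mul]
  · refine lintegral_congr fun ψ => ?_
    have : fw d W (h + extz B ψ) = fw d W h * fw d W (extz B ψ) := by
      unfold fw
      rw [hh _ (extz_off B ψ), neg_add, Real.exp_add, ENNReal.ofReal_mul (by positivity)]
    rw [this, add_comm h]; ring
  · exact (hg.comp (hext.add_const h)).mul ((measurable_fw d W).comp hext)

lemma integrable_gffDensity {d : ℕ} {W B : Finset (Fin d → ℤ)} {C : ℝ} (hS : Sob d W C) (hB : B ⊆ W) :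
    Integrable (gffDensity d B) := by
  set b : ℝ := 1 / (C * (B.card + 1)) with hb
  have hC := hS.1
  have hb0 : 0 < b := by positivity
  have hm : Measurable (gffDensity d B) := by
    have := measurable_ham d B
    have hext : Measurable (extz B : (B → ℝ) → _) := by
      refine measurable_pi_iff.2 fun y => ?_
      unfold extz
      split_ifs
      · fun_prop
      · fun_prop
    unfold gffDensity; fun_prop
  have hint : Integrable (fun ψ : B → ℝ => ∏ x, Real.exp (-b * ψ x ^ 2)) :=
    Integrable.fintype_prod (f := fun _ t => Real.exp (-b * t^2)) fun _ => integrable_exp_neg_mul_sq hb0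
  refine hint.mono' hm.aestronglyMeasurable (Filter.Eventually.of_forall fun ψ => ?_)
  rw [← Real.exp_sum]
  unfold gffDensity
  rw [Real.norm_eq_abs, abs_of_pos (Real.exp_pos _), Real.exp_le_exp,
    ham_mono_eq hB _ (extz_off B ψ), ← mul_sum]
  have h1 : ∀ x : B, ψ x ^ 2 ≤ C * ham d W (extz B ψ) := by
    intro x
    have := hS.2 (extz B ψ) (fun y hy => extz_off _ _ _ fun h => hy (hB h)) x (hB x.2)
    rwa [extz_on _ _ _ x.2] at this
  have h0 : 0 ≤ ham d W (extz B ψ) := by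
    unfold ham
    refine mul_nonneg (by positivity) (sum_nonneg fun x _ => sum_nonneg fun y _ => ?_)
    split_ifs <;> positivity
  have h2 : ∑ x : B, ψ x ^ 2 ≤ B.card * (C * ham d W (extz B ψ)) := by
    have := sum_le_card_nsmul (univ : Finset B) (fun x => ψ x ^ 2) _ (fun x _ => h1 x)
    simpa using this
  have h3 : b * ∑ x : B, ψ x ^ 2 ≤ ham d W (extz B ψ) := by
    rw [hb, one_div_mul_eq_div, div_le_iff₀ (by positivity)]
    nlinarith [mul_nonneg hC.le h0]
  linarith

lemma fw_extz {d : ℕ} {W B : Finset (Fin d → ℤ)} (hB : B ⊆ W) (ψ : B → ℝ) :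
    ENNReal.ofReal (gffDensity d B ψ) = fw d W (extz B ψ) := by
  unfold gffDensity fw
  rw [ham_mono_eq hB _ (extz_off B ψ)]

lemma gffZ_eq {d : ℕ} {W B : Finset (Fin d → ℤ)} {C : ℝ} (hS : Sob d W C) (hB : B ⊆ W) :
    ENNReal.ofReal (gffZ d B) = lm B (fw d W) 0 := by
  unfold gffZ
  rw [ofReal_integral_eq_lintegral_ofReal (integrable_gffDensity hS hB)
    (Filter.Eventually.of_forall fun _ => (Real.exp_pos _).le), lm_zero]
  exact lintegral_congr fun ψ => fw_extz hB ψ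

lemma lm_ne_top {d : ℕ} {W B : Finset (Fin d → ℤ)} {C : ℝ} (hS : Sob d W C) (hB : B ⊆ W) :
    lm B (fw d W) 0 ≠ ⊤ := by
  rw [← gffZ_eq hS hB]; exact ENNReal.ofReal_ne_top

lemma lm_ne_zero {d : ℕ} {W B : Finset (Fin d → ℤ)} :
    lm B (fw d W) 0 ≠ 0 := by
  rw [lm_zero]
  have hext : Measurable (extz B : (B → ℝ) → _) := by
    refine measurable_pi_iff.2 fun y => ?_
    unfold extz
    split_ifs
    · fun_prop
    · fun_prop
  have hm : Measurable (fun ψ : B → ℝ => fw d W (extz B ψ)) := (measurable_fw d W).comp hext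
  apply ne_of_gt
  rw [lintegral_pos_iff_support hm]
  have : Function.support (fun ψ : B → ℝ => fw d W (extz B ψ)) = Set.univ := by
    ext ψ
    simp [fw, Real.exp_pos]
  rw [this]
  exact isOpen_univ.measure_pos volume Set.univ_nonempty

lemma measurable_extz {d : ℕ} (B : Finset (Fin d → ℤ)) : Measurable (extz B : (B → ℝ) → _) := by
  refine measurable_pi_iff.2 fun y => ?_
  unfold extz
  split_ifs
  · fun_prop
  · fun_prop

noncomputable def indS {d : ℕ} (a : ℝ) (T : Finset (Fin d → ℤ)) (φ : (Fin d → ℤ) → ℝ) : ENNReal :=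
  ∏ y ∈ T, ind (Set.Icc 0 a) (φ y)

lemma measurable_indS {d : ℕ} (a : ℝ) (T : Finset (Fin d → ℤ)) : Measurable (indS a T) := by
  unfold indS
  exact Finset.measurable_fun_prod _ fun y _ =>
    (measurable_ind measurableSet_Icc).comp (measurable_pi_apply y)

lemma indS_one {d : ℕ} {a : ℝ} {T : Finset (Fin d → ℤ)} {φ : (Fin d → ℤ) → ℝ}
    (h : ∀ y ∈ T, φ y ∈ Set.Icc 0 a) : indS a T φ = 1 :=
  prod_eq_one fun y hy => by simp only [ind, Set.indicator_of_mem (h y hy), Pi.one_apply]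

lemma indS_zero {d : ℕ} {a : ℝ} {T : Finset (Fin d → ℤ)} {φ : (Fin d → ℤ) → ℝ}
    (h : ¬ ∀ y ∈ T, φ y ∈ Set.Icc 0 a) : indS a T φ = 0 := by
  push Not at h
  obtain ⟨y, hy, h⟩ := h
  exact prod_eq_zero hy (by simp only [ind, Set.indicator_of_notMem h])

lemma gff_eq {d : ℕ} {W B T : Finset (Fin d → ℤ)} {C : ℝ} (hS : Sob d W C) (hB : B ⊆ W)
    (hT : T ⊆ B) (a : ℝ) :
    gff d B {ψ | ∀ y : B, (y : Fin d → ℤ) ∈ T → ψ y ∈ Set.Icc 0 a} =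
      (lm B (fw d W) 0)⁻¹ * lm B (fun φ => indS a T φ * fw d W φ) 0 := by
  unfold gff
  have hmeas : MeasurableSet {ψ : B → ℝ | ∀ y : B, (y : Fin d → ℤ) ∈ T → ψ y ∈ Set.Icc 0 a} := by
    simp only [Set.ofPred_forall]
    exact MeasurableSet.iInter fun y => MeasurableSet.iInter fun _ =>
      measurableSet_Icc.preimage (measurable_pi_apply y)
  rw [Measure.smul_apply, smul_eq_mul, gffZ_eq hS hB, withDensity_apply _ hmeas, lm_zero B (fun φ => indS a T φ * fw d W φ),
    ← lintegral_indicator hmeas]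
  congr 1
  refine lintegral_congr fun ψ => ?_
  by_cases h : ψ ∈ {ψ : B → ℝ | ∀ y : B, (y : Fin d → ℤ) ∈ T → ψ y ∈ Set.Icc 0 a}
  · rw [Set.indicator_of_mem h, fw_extz hB, indS_one, one_mul]
    intro y hy
    rw [extz_on _ _ _ (hT hy)]
    exact h ⟨y, hT hy⟩ hy
  · rw [Set.indicator_of_notMem h, indS_zero, zero_mul]
    intro h'
    apply h
    intro y hy
    have := h' y hy
    rwa [extz_on _ _ _ y.2] at this

lemma marg {d : ℕ} {W B : Finset (Fin d → ℤ)} {C : ℝ} (hS : Sob d W C) (hB : B ⊆ W)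
    {x : Fin d → ℤ} (hx : x ∈ B) : ∃ κ : ℝ, 1 / C ≤ κ ∧ ∃ K : ENNReal, K ≠ 0 ∧ K ≠ ⊤ ∧
      ∀ g : ℝ → ENNReal, Measurable g →
        lm B (fun φ => g (φ x) * fw d W φ) 0 = K * ∫⁻ t, g t * ew κ t := by
  set B' := B.erase x with hB'
  have hB'W : B' ⊆ W := (erase_subset _ _).trans hB
  obtain ⟨u, hu, hh⟩ := exists_harm hS hB'W (Pi.single x 1)
  have hux : u x = 1 := by rw [hu x (by simp [hB'])]; simp
  have hC := hS.1
  refine ⟨ham d W u, ?_, lm B' (fw d W) 0, lm_ne_zero, lm_ne_top hS hB'W, fun g hg => ?_⟩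
  · have := hS.2 u (fun y hy => ?_) x (hB hx)
    · rw [hux] at this
      rw [div_le_iff₀ hC]; linarith
    · rw [hu y fun h => hy (hB'W h)]
      have : y ≠ x := fun h => hy (h ▸ hB hx)
      simp [this]
  · have hgm : Measurable (fun φ : (Fin d → ℤ) → ℝ => g (φ x)) := hg.comp (measurable_pi_apply x)
    unfold lm
    rw [lmarginal_erase _ (measurable_mul_fw W hgm) hx]
    have hge : Measurable (fun t => g t * ew (ham d W u) t) := hg.mul (measurable_ew _)
    rw [← lintegral_const_mul _ hge]
    refine lintegral_congr fun t => ?_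
    have key := lm_harm (W := W) (B := B') (Function.update 0 x t) (t • u) (fun y hy => ?_) (fun η hη => ?_)
      (fun φ => g (φ x)) hgm
    · unfold lm at key
      rw [key]
      have e1 : fw d W (t • u) = ew (ham d W u) t := by
        unfold fw ew; rw [ham_smul]; congr 2; ring
      have e2 : lm B' (fun φ => g ((φ + t • u) x) * fw d W φ) 0 = g t * lm B' (fw d W) 0 := by
        have hfe : Measurable (fun ψ : B' → ℝ => fw d W (extz B' ψ)) :=
          (measurable_fw d W).comp (measurable_extz B')
        rw [lm_zero, lm_zero, ← lintegral_const_mul _ hfe]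
        refine lintegral_congr fun ψ => ?_
        simp [hux, extz_off B' ψ x (by simp [hB'])]
      unfold lm at e2
      rw [e1, e2]; ring
    · simp only [Pi.smul_apply, hu y hy, smul_eq_mul]
      by_cases h : y = x
      · subst h; simp
      · simp [h]
    · by_cases ht : t = 0
      · subst ht
        have : ham d W 0 = 0 := by simp [ham]
        simp [this]
      · have e : t • u + η = t • (u + t⁻¹ • η) := by
          rw [smul_add, smul_smul, mul_inv_cancel₀ ht, one_smul]
        rw [e, ham_smul, hh _ (fun y hy => by simp [hη y hy]), ham_smul, ham_smul]
        field_simp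

lemma step {d : ℕ} {W S : Finset (Fin d → ℤ)} {C : ℝ} (hS : Sob d W C) (hSW : S ⊆ W)
    {x : Fin d → ℤ} (hx : x ∈ W \ S) {a : ℝ} (ha : 0 < a) :
    (lm (W \ S) (fw d W) 0)⁻¹ * lm (W \ S) (fun φ => indS a {x} φ * fw d W φ) 0 *
      lm W (fun φ => indS a S φ * fw d W φ) 0 ≤
    lm W (fun φ => indS a (insert x S) φ * fw d W φ) 0 := by
  have hB : W \ S ⊆ W := sdiff_subset
  set B := W \ S with hBdef
  set p := (lm B (fw d W) 0)⁻¹ * lm B (fun φ => indS a {x} φ * fw d W φ) 0 with hp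
  have hxS : x ∉ S := (mem_sdiff.1 hx).2
  have hW : W = S ∪ B := (union_sdiff_of_subset hSW).symm
  have hdis : Disjoint S B := disjoint_sdiff
  have split : ∀ F : ((Fin d → ℤ) → ℝ) → ENNReal, Measurable F →
      lm W F 0 = ∫⁻ s : S → ℝ, lm B F (extz S s) := by
    intro F hF
    rw [← lm_zero S (lm B F)]
    unfold lm
    rw [← lmarginal_union _ F hF hdis, ← hW]
  rw [split _ (measurable_mul_fw W (measurable_indS a S)),
    split _ (measurable_mul_fw W (measurable_indS a (insert x S)))]
  refine (lintegral_const_mul_le _ _).trans (lintegral_mono fun s => ?_)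
  by_cases hs : ∀ y ∈ S, extz S s y ∈ Set.Icc 0 a
  · obtain ⟨h, hhs, hh⟩ := exists_harm hS hB (extz S s)
    have hin : ∀ y ∉ B, h y ∈ Set.Icc 0 a := by
      intro y hy
      rw [hhs y hy]
      by_cases hyS : y ∈ S
      · exact hs y hyS
      · rw [extz_off _ _ _ hyS]; exact ⟨le_rfl, ha.le⟩
    have hhx := harm_clamp hS hB h a ha.le hin hh x
    obtain ⟨κ, hκ, K, hK0, hKt, hmarg⟩ := marg hS hB hx
    have hκ0 : 0 ≤ κ := le_trans (by have := hS.1; positivity) hκ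
    have hone : ∀ ψ : B → ℝ, indS a S (extz B ψ + h) = 1 := by
      intro ψ
      apply indS_one
      intro y hy
      have hyB : y ∉ B := fun hc => (disjoint_left.1 hdis hy hc)
      rw [Pi.add_apply, extz_off _ _ _ hyB, zero_add]
      exact hin y hyB
    beta_reduce
    rw [lm_harm (extz S s) h hhs hh _ (measurable_indS a S), lm_harm (extz S s) h hhs hh _ (measurable_indS a (insert x S))]
    have e1 : lm B (fun φ => indS a S (φ + h) * fw d W φ) 0 = lm B (fw d W) 0 := by
      rw [lm_zero, lm_zero]
      simp only [hone, one_mul]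
    have e2 : lm B (fun φ => indS a (insert x S) (φ + h) * fw d W φ) 0 =
        lm B (fun φ => (fun t => ind (Set.Icc 0 a) (t + h x)) (φ x) * fw d W φ) 0 := by
      rw [lm_zero, lm_zero]
      refine lintegral_congr fun ψ => ?_
      have : indS a (insert x S) (extz B ψ + h) = ind (Set.Icc 0 a) ((extz B ψ + h) x) * indS a S (extz B ψ + h) := by
        unfold indS
        rw [prod_insert hxS]
      rw [this, hone, mul_one]; rfl
    have e3 : lm B (fun φ => indS a {x} φ * fw d W φ) 0 = lm B (fun φ => ind (Set.Icc 0 a) (φ x) * fw d W φ) 0 := by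
      simp [indS]
    have mI := measurable_ind (measurableSet_Icc (a := (0:ℝ)) (b := a))
    rw [e1, e2, hmarg (fun t => ind (Set.Icc 0 a) (t + h x)) (mI.comp (measurable_add_const _)), hp, e3, hmarg _ mI]
    have hc := ENNReal.inv_mul_cancel (lm_ne_zero (W := W) (B := B)) (lm_ne_top hS hB)
    calc _ = ((lm B (fw d W) 0)⁻¹ * lm B (fw d W) 0) * (fw d W h * (K * ∫⁻ t, ind (Set.Icc 0 a) t * ew κ t)) := by ring
      _ = fw d W h * (K * ∫⁻ t, ind (Set.Icc 0 a) t * ew κ t) := by rw [hc, one_mul]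
      _ ≤ _ := by
        gcongr fw d W h * (K * ?_)
        exact ew_shift hκ0 hhx
  · have : lm B (fun φ => indS a S φ * fw d W φ) (extz S s) = 0 := by
      rw [lm_shift B _ (extz S s) (extz S s) (fun _ _ => rfl)]
      rw [lintegral_eq_zero_of_ae_eq_zero]
      refine Filter.Eventually.of_forall fun ψ => ?_
      simp only [Pi.zero_apply]
      rw [indS_zero, zero_mul]
      intro h'
      apply hs
      intro y hy
      have hyB : y ∉ B := fun hc => (disjoint_left.1 hdis hy hc)
      have := h' y hy
      rwa [Pi.add_apply, extz_off B _ _ hyB, add_zero] at this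
    rw [this, mul_zero]
    exact zero_le

lemma single_lower {d : ℕ} {W B : Finset (Fin d → ℤ)} {C : ℝ} (hS : Sob d W C) (hB : B ⊆ W)
    {x : Fin d → ℤ} (hx : x ∈ B) {a : ℝ} (ha : 0 < a) :
    ENNReal.ofReal (√((1/C)/π) * Real.exp (-(1/C)/4) * min (1/2) a) ≤
    (lm B (fw d W) 0)⁻¹ * lm B (fun φ => indS a {x} φ * fw d W φ) 0 := by
  obtain ⟨κ, hκ, K, hK0, hKt, hmarg⟩ := marg hS hB hx
  have hC : 0 < 1 / C := by have := hS.1; positivity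
  have e3 : lm B (fun φ => indS a {x} φ * fw d W φ) 0 = lm B (fun φ => ind (Set.Icc 0 a) (φ x) * fw d W φ) 0 := by
    simp [indS]
  have e4 : lm B (fw d W) 0 = K * ∫⁻ t, ew κ t := by
    have := hmarg (fun _ => 1) measurable_const
    simpa using this
  have hz := lm_ne_zero (W := W) (B := B)
  have ht := lm_ne_top hS hB
  rw [← mul_comm (lm B _ 0), ← div_eq_mul_inv, ENNReal.le_div_iff_mul_le (Or.inl hz) (Or.inl ht), e3, e4,
    hmarg _ (measurable_ind measurableSet_Icc)]
  calc _ = K * (ENNReal.ofReal (√((1/C)/π) * Real.exp (-(1/C)/4) * min (1/2) a) * ∫⁻ t, ew κ t) := by ring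
    _ ≤ _ := by
      gcongr K * ?_
      exact ew_lower hC hκ ha

lemma prod_step {d : ℕ} {W : Finset (Fin d → ℤ)} {C : ℝ} (hS : Sob d W C) {a : ℝ} (ha : 0 < a) (m : ℕ) :
    ∀ x : Fin m → Fin d → ℤ, Function.Injective x → (∀ i, x i ∈ W) →
      (∏ i : Fin m, (lm (W \ (univ.filter (fun j => i < j)).image x) (fw d W) 0)⁻¹ *
        lm (W \ (univ.filter (fun j => i < j)).image x) (fun φ => indS a {x i} φ * fw d W φ) 0) *
        lm W (fw d W) 0 ≤
      lm W (fun φ => indS a (univ.image x) φ * fw d W φ) 0 := by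
  induction m with
  | zero => intro x _ _; simp [indS]
  | succ m ih =>
    intro x hinj hx
    have ih' := ih (fun i => x i.succ) (fun i j h => Fin.succ_injective _ (hinj h)) (fun i => hx _)
    have im0 : (univ.filter (fun j : Fin (m+1) => 0 < j)).image x = univ.image (fun i : Fin m => x i.succ) := by
      ext y
      simp only [mem_image, mem_filter, mem_univ, true_and]
      constructor
      · rintro ⟨j, hj, rfl⟩
        exact ⟨j.pred hj.ne', by simp⟩
      · rintro ⟨j, rfl⟩
        exact ⟨j.succ, Fin.succ_pos j, rfl⟩
    have ims : ∀ i : Fin m, (univ.filter (fun j : Fin (m+1) => i.succ < j)).image x =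
        (univ.filter (fun j : Fin m => i < j)).image (fun i : Fin m => x i.succ) := by
      intro i
      ext y
      simp only [mem_image, mem_filter, mem_univ, true_and]
      constructor
      · rintro ⟨j, hj, rfl⟩
        have h0 : j ≠ 0 := by rintro rfl; exact absurd hj (Fin.not_lt_zero _)
        refine ⟨j.pred h0, ?_, by simp⟩
        rw [← Fin.succ_lt_succ_iff]; simpa using hj
      · rintro ⟨j, hj, rfl⟩
        exact ⟨j.succ, Fin.succ_lt_succ_iff.2 hj, rfl⟩
    have imall : univ.image x = insert (x 0) (univ.image (fun i : Fin m => x i.succ)) := by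
      ext y
      simp only [mem_image, mem_univ, true_and, mem_insert, Fin.exists_fin_succ, eq_comm]
    rw [Fin.prod_univ_succ, imall]
    simp only [im0, ims]
    rw [mul_assoc]
    refine le_trans (mul_le_mul_right ih' _) ?_
    refine step hS ?_ ?_ ha
    · intro y hy
      obtain ⟨i, _, rfl⟩ := mem_image.1 hy
      exact hx _
    · refine mem_sdiff.2 ⟨hx 0, fun h => ?_⟩
      obtain ⟨i, _, hi⟩ := mem_image.1 h
      exact (Fin.succ_ne_zero i) (hinj hi)


/-- For `d ≥ 3` there is `c = c(d) > 0` such that for `A = {x_1, …, x_m} ⊆ Λ_N` and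
`A_i = {x_{i+1}, …, x_m}`, the GFF satisfies
`P_N(φ ∈ [0,a] on A) ≥ ∏ P_{A_i^c}(φ(x_i) ∈ [0,a]) ≥ (c · min (1/2) a)^m`. -/
theorem gff_confinement_product_lower_bound (d : ℕ) (hd : 3 ≤ d) :
    ∃ c : ℝ, 0 < c ∧ ∀ N : ℕ, ∀ a : ℝ, 0 < a → ∀ m : ℕ,
      ∀ x : Fin m → Fin d → ℤ, Function.Injective x → (∀ i, x i ∈ box d N) →
        gff d (box d N)
            {ψ | ∀ y : box d N, (∃ i, (y : Fin d → ℤ) = x i) → ψ y ∈ Set.Icc 0 a} ≥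
          ∏ i : Fin m,
            gff d (box d N \ (Finset.univ.filter (fun j => i < j)).image x)
              {ψ | ∀ y : (box d N \ (Finset.univ.filter (fun j => i < j)).image x : Finset (Fin d → ℤ)),
                (y : Fin d → ℤ) = x i → ψ y ∈ Set.Icc 0 a} ∧
        (∏ i : Fin m,
            gff d (box d N \ (Finset.univ.filter (fun j => i < j)).image x)
              {ψ | ∀ y : (box d N \ (Finset.univ.filter (fun j => i < j)).image x : Finset (Fin d → ℤ)),
                (y : Fin d → ℤ) = x i → ψ y ∈ Set.Icc 0 a}) ≥
          ENNReal.ofReal ((c * min (1 / 2) a) ^ m) := by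

  obtain ⟨C, hC, hsob⟩ := sobolev d hd
  have hpi := Real.pi_pos
  refine ⟨√((1/C)/π) * Real.exp (-(1/C)/4), by positivity, fun N a ha m x hinj hx => ?_⟩
  have hS : Sob d (box d N) C := ⟨hC, hsob N⟩
  have hxB : ∀ i : Fin m, x i ∈ box d N \ (univ.filter (fun j => i < j)).image x := by
    intro i
    refine mem_sdiff.2 ⟨hx i, fun h => ?_⟩
    obtain ⟨j, hj, hji⟩ := mem_image.1 h
    have := (mem_filter.1 hj).2
    exact absurd (hinj hji) this.ne'
  have hterm : ∀ i : Fin m, gff d (box d N \ (univ.filter (fun j => i < j)).image x)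
      {ψ | ∀ y : (box d N \ (univ.filter (fun j => i < j)).image x : Finset (Fin d → ℤ)),
        (y : Fin d → ℤ) = x i → ψ y ∈ Set.Icc 0 a} =
      (lm (box d N \ (univ.filter (fun j => i < j)).image x) (fw d (box d N)) 0)⁻¹ *
        lm (box d N \ (univ.filter (fun j => i < j)).image x)
          (fun φ => indS a {x i} φ * fw d (box d N) φ) 0 := by
    intro i
    rw [← gff_eq hS sdiff_subset (singleton_subset_iff.2 (hxB i)) a]
    simp only [mem_singleton]
  have hall : gff d (box d N)
      {ψ | ∀ y : box d N, (∃ i, (y : Fin d → ℤ) = x i) → ψ y ∈ Set.Icc 0 a} =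
      (lm (box d N) (fw d (box d N)) 0)⁻¹ *
        lm (box d N) (fun φ => indS a (univ.image x) φ * fw d (box d N) φ) 0 := by
    rw [← gff_eq hS Subset.rfl (fun y hy => by
      obtain ⟨i, _, rfl⟩ := mem_image.1 hy
      exact hx i) a]
    simp only [mem_image, mem_univ, true_and, eq_comm]
  simp only [hterm]
  rw [hall]
  refine ⟨?_, ?_⟩
  · rw [ge_iff_le, mul_comm (lm (box d N) _ 0)⁻¹, ← div_eq_mul_inv,
      ENNReal.le_div_iff_mul_le (Or.inl lm_ne_zero) (Or.inl (lm_ne_top hS Subset.rfl))]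
    exact prod_step hS ha m x hinj hx
  · rw [ge_iff_le, ENNReal.ofReal_pow (by positivity)]
    calc _ = ∏ _i : Fin m, ENNReal.ofReal (√((1/C)/π) * Real.exp (-(1/C)/4) * min (1/2) a) := by simp
      _ ≤ _ := prod_le_prod' fun i _ => single_lower hS sdiff_subset (hxB i) ha
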